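/- arXiv:1503.06715 — 2 statements merged into one kernel-verified Lean document; each statement's English description precedes it below -/
import Mathlib

section
/- Let Σ = {(s,t) : s ∈ ℝ, t ≥ 0}. Suppose f ∈ L¹_loc(Σ) with distributional derivative ∂_t f ∈ L¹_loc(Σ). Then the trace f(·,0) is well defined as an element of L¹_loc(ℝ) via (f(·,0), φ) := -∫_Σ f(s,t) φ(s) η'(t) dt ds - ∫_Σ ∂_t f(s,t) φ(s) η(t) dt ds, where η ∈ C_c^∞([0,∞)) with η ≡ 1 on [0,1]. Moreover, if f_n → f and ∂_t f_n → ∂_t f in L¹_loc(Σ), then f_n(·,0) → f(·,0) in L¹_loc(ℝ). -/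
open MeasureTheory Set Filter Topology

/-- The closed upper half plane Σ = {(s,t) : t ≥ 0}. -/
def UHP : Set (ℝ × ℝ) := {p | 0 ≤ p.2}

/-- `ft` is the distributional time derivative of `f` in the interior of Σ. -/
def HasDistribTDeriv (f ft : ℝ × ℝ → ℝ) : Prop :=
  ∀ φ : ℝ × ℝ → ℝ, ContDiff ℝ (⊤ : ℕ∞) φ → HasCompactSupport φ →
    tsupport φ ⊆ {p : ℝ × ℝ | 0 < p.2} →
    (∫ p in UHP, f p * fderiv ℝ φ p (0, 1)) = -∫ p in UHP, ft p * φ p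

/-- `tr` is the L¹_loc trace of `f` on {t = 0}, defined via the cutoff pairing. -/
def IsTraceAt0 (f ft : ℝ × ℝ → ℝ) (tr : ℝ → ℝ) : Prop :=
  MeasureTheory.LocallyIntegrable tr ∧
  ∀ η : ℝ → ℝ, ContDiff ℝ (⊤ : ℕ∞) η → HasCompactSupport η →
    (∀ t ∈ Set.Icc (0:ℝ) 1, η t = 1) →
  ∀ φ : ℝ → ℝ, Continuous φ → HasCompactSupport φ →
    (∫ s, tr s * φ s) =
      -(∫ p in UHP, f p * φ p.1 * deriv η p.2) - ∫ p in UHP, ft p * φ p.1 * η p.2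

theorem isClosed_UHP : IsClosed UHP := isClosed_le continuous_const continuous_snd

theorem UHP_eq_prod : UHP = (univ : Set ℝ) ×ˢ Ici (0 : ℝ) := by
  ext p; simp [UHP]

theorem volume_restrict_UHP :
    (volume : Measure (ℝ × ℝ)).restrict UHP
      = (volume : Measure ℝ).prod ((volume : Measure ℝ).restrict (Ici 0)) := by
  rw [UHP_eq_prod, Measure.volume_eq_prod, ← Measure.prod_restrict, Measure.restrict_univ]

theorem HasCompactSupport.mul_fst_snd {φ a : ℝ → ℝ} (hφ : HasCompactSupport φ)
    (ha : HasCompactSupport a) : HasCompactSupport fun p : ℝ × ℝ => φ p.1 * a p.2 := by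
  refine HasCompactSupport.intro (IsCompact.prod hφ ha) fun p hp => ?_
  by_contra h
  exact hp ⟨subset_tsupport _ (left_ne_zero_of_mul h), subset_tsupport _ (right_ne_zero_of_mul h)⟩

/-- A locally integrable function on the half plane is integrable against a tensor product of
continuous compactly supported functions. -/
theorem integrableOn_UHP_mul_mul {g : ℝ × ℝ → ℝ} (hg : LocallyIntegrableOn g UHP) {φ a : ℝ → ℝ}
    (hφ : Continuous φ) (hφc : HasCompactSupport φ) (ha : Continuous a)
    (hac : HasCompactSupport a) : IntegrableOn (fun p => g p * φ p.1 * a p.2) UHP := by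
  have h := ((locallyIntegrableOn_iff_locallyIntegrable_restrict isClosed_UHP).1
    hg).integrable_smul_right_of_hasCompactSupport (g := fun p : ℝ × ℝ => φ p.1 * a p.2)
    (by fun_prop) (hφc.mul_fst_snd hac)
  simp only [smul_eq_mul, ← mul_assoc] at h
  exact h

/-- The weighted integral of `g` along the half line `{s} × [0, ∞)`. -/
noncomputable def sliceIntegral (g : ℝ × ℝ → ℝ) (a : ℝ → ℝ) (s : ℝ) : ℝ :=
  ∫ t in Ici (0 : ℝ), g (s, t) * a t

theorem integral_sliceIntegral_mul {g : ℝ × ℝ → ℝ} (hg : LocallyIntegrableOn g UHP) {φ a : ℝ → ℝ}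
    (hφ : Continuous φ) (hφc : HasCompactSupport φ) (ha : Continuous a)
    (hac : HasCompactSupport a) :
    ∫ s, sliceIntegral g a s * φ s = ∫ p in UHP, g p * φ p.1 * a p.2 := by
  have h := integrableOn_UHP_mul_mul hg hφ hφc ha hac
  rw [IntegrableOn, volume_restrict_UHP] at h
  rw [volume_restrict_UHP, integral_prod _ h]
  refine integral_congr_ae (.of_forall fun s => ?_)
  simp only [sliceIntegral, ← integral_mul_const]
  exact integral_congr_ae (.of_forall fun t => by ring)

section Strip

variable {g : ℝ × ℝ → ℝ} {a : ℝ → ℝ} {K : Set ℝ} {R : ℝ}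

theorem prod_Icc_subset_UHP : K ×ˢ Icc 0 R ⊆ UHP := fun _ hp => hp.2.1

theorem mul_eq_zero_of_mem_strip_diff (haR : ∀ t, R < t → a t = 0) {p : ℝ × ℝ}
    (hp : p ∈ (K ×ˢ Ici (0 : ℝ)) \ K ×ˢ Icc 0 R) : g p * a p.2 = 0 := by
  rw [haR, mul_zero]
  by_contra! h
  exact hp.2 ⟨hp.1.1, hp.1.2, h⟩

theorem integrableOn_strip (hg : LocallyIntegrableOn g UHP) (hK : IsCompact K)
    (ha : Continuous a) (haR : ∀ t, R < t → a t = 0) :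
    IntegrableOn (fun p => g p * a p.2) (K ×ˢ Ici (0 : ℝ)) := by
  have hc : IsCompact (K ×ˢ Icc 0 R) := hK.prod isCompact_Icc
  refine IntegrableOn.of_forall_sdiff_eq_zero (s := K ×ˢ Icc 0 R) ?_
    (hK.measurableSet.prod measurableSet_Ici) fun p => mul_eq_zero_of_mem_strip_diff haR
  exact (hg.integrableOn_compact_subset prod_Icc_subset_UHP hc).mul_continuousOn
    (ha.comp continuous_snd).continuousOn hc

theorem setIntegral_abs_sliceIntegral_le (hg : LocallyIntegrableOn g UHP) (hK : IsCompact K)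
    (ha : Continuous a) (haR : ∀ t, R < t → a t = 0) {C : ℝ} (hC : ∀ t, ‖a t‖ ≤ C) :
    ∫ s in K, |sliceIntegral g a s| ≤ C * ∫ p in K ×ˢ Icc 0 R, |g p| := by
  have hi := integrableOn_strip hg hK ha haR
  have hc : IsCompact (K ×ˢ Icc 0 R) := hK.prod isCompact_Icc
  have hgi := hg.integrableOn_compact_subset prod_Icc_subset_UHP hc
  have hp := hi
  rw [IntegrableOn, Measure.volume_eq_prod, ← Measure.prod_restrict] at hp
  calc ∫ s in K, |sliceIntegral g a s|
      ≤ ∫ s in K, ∫ t in Ici (0 : ℝ), ‖g (s, t) * a t‖ :=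
        integral_mono hp.integral_prod_left.norm hp.integral_norm_prod_left
          fun s => norm_integral_le_integral_norm fun t => g (s, t) * a t
    _ = ∫ p in K ×ˢ Ici (0 : ℝ), ‖g p * a p.2‖ := by
        rw [Measure.volume_eq_prod, setIntegral_prod _ hi.norm]
    _ = ∫ p in K ×ˢ Icc 0 R, ‖g p * a p.2‖ :=
        (setIntegral_eq_of_subset_of_forall_sdiff_eq_zero
          (hK.measurableSet.prod measurableSet_Ici) (prod_mono_right Icc_subset_Ici_self)
          fun p hp => by rw [mul_eq_zero_of_mem_strip_diff haR hp, norm_zero])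
    _ ≤ ∫ p in K ×ˢ Icc 0 R, C * |g p| :=
        integral_mono (hi.mono_set (prod_mono_right Icc_subset_Ici_self)).norm
          (hgi.norm.const_mul C) fun p => by
          dsimp only
          rw [norm_mul, mul_comm]
          exact mul_le_mul_of_nonneg_right (hC _) (norm_nonneg _)
    _ = C * ∫ p in K ×ˢ Icc 0 R, |g p| := integral_const_mul _ _

end Strip

theorem HasCompactSupport.exists_forall_lt_eq_zero {a : ℝ → ℝ} (hac : HasCompactSupport a) :
    ∃ R, ∀ t, R < t → a t = 0 := by
  obtain ⟨R, hR⟩ := IsCompact.bddAbove hac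
  exact ⟨R, fun t ht => image_eq_zero_of_notMem_tsupport fun h => ht.not_ge (hR h)⟩

theorem locallyIntegrable_sliceIntegral {g : ℝ × ℝ → ℝ} (hg : LocallyIntegrableOn g UHP)
    {a : ℝ → ℝ} (ha : Continuous a) (hac : HasCompactSupport a) :
    LocallyIntegrable (sliceIntegral g a) := by
  obtain ⟨R, hR⟩ := hac.exists_forall_lt_eq_zero
  refine locallyIntegrable_iff.2 fun K hK => ?_
  have hp := integrableOn_strip hg hK ha hR
  rw [IntegrableOn, Measure.volume_eq_prod, ← Measure.prod_restrict] at hp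
  exact hp.integral_prod_left

/-- The representative of the trace at `t = 0` determined by the cutoff `η`. -/
noncomputable def cutoffTrace (η : ℝ → ℝ) (f ft : ℝ × ℝ → ℝ) (s : ℝ) : ℝ :=
  -sliceIntegral f (deriv η) s - sliceIntegral ft η s

section CutoffTrace

variable {f ft : ℝ × ℝ → ℝ} {η : ℝ → ℝ}

theorem locallyIntegrable_cutoffTrace (hf : LocallyIntegrableOn f UHP)
    (hft : LocallyIntegrableOn ft UHP) (hη : ContDiff ℝ (⊤ : ℕ∞) η) (hηc : HasCompactSupport η) :
    LocallyIntegrable (cutoffTrace η f ft) :=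
  (locallyIntegrable_sliceIntegral hf (hη.continuous_deriv (by simp)) hηc.deriv).neg.sub
    (locallyIntegrable_sliceIntegral hft hη.continuous hηc)

theorem integral_cutoffTrace_mul (hf : LocallyIntegrableOn f UHP)
    (hft : LocallyIntegrableOn ft UHP) (hη : ContDiff ℝ (⊤ : ℕ∞) η) (hηc : HasCompactSupport η)
    {φ : ℝ → ℝ} (hφ : Continuous φ) (hφc : HasCompactSupport φ) :
    ∫ s, cutoffTrace η f ft s * φ s =
      -(∫ p in UHP, f p * φ p.1 * deriv η p.2) - ∫ p in UHP, ft p * φ p.1 * η p.2 := by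
  have hη' : Continuous (deriv η) := hη.continuous_deriv (by simp)
  have h1 := (locallyIntegrable_sliceIntegral hf hη'
    hηc.deriv).integrable_smul_right_of_hasCompactSupport hφ hφc
  have h2 := (locallyIntegrable_sliceIntegral hft hη.continuous
    hηc).integrable_smul_right_of_hasCompactSupport hφ hφc
  simp only [smul_eq_mul] at h1 h2
  rw [← integral_sliceIntegral_mul hf hφ hφc hη' hηc.deriv,
    ← integral_sliceIntegral_mul hft hφ hφc hη.continuous hηc, ← integral_neg,
    ← integral_sub (by exact h1.neg) h2]
  exact integral_congr_ae (.of_forall fun s => by simp only [cutoffTrace]; ring)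

end CutoffTrace

/-- The weak derivative identity tested against `φ(s) ψ(t)` with `ψ` vanishing on `[0, 1]`. -/
theorem HasDistribTDeriv.integral_mul_deriv {f ft : ℝ × ℝ → ℝ} (h : HasDistribTDeriv f ft)
    {φ ψ : ℝ → ℝ} (hφ : ContDiff ℝ (⊤ : ℕ∞) φ) (hφc : HasCompactSupport φ)
    (hψ : ContDiff ℝ (⊤ : ℕ∞) ψ) (hψc : HasCompactSupport ψ)
    (hψ0 : ∀ t ∈ Icc (0 : ℝ) 1, ψ t = 0) :
    ∫ p in UHP, f p * φ p.1 * deriv ψ p.2 = -∫ p in UHP, ft p * φ p.1 * ψ p.2 := by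
  set χ : ℝ → ℝ := fun t => Real.smoothTransition (2 * t - 1) * ψ t with hχ
  have hχs : ContDiff ℝ (⊤ : ℕ∞) χ :=
    (Real.smoothTransition.contDiff.comp (by fun_prop)).mul hψ
  have hχc : HasCompactSupport χ := hψc.mul_left
  have hχ_low : ∀ t, t ≤ 1 / 2 → χ t = 0 := fun t ht => by
    simp only [hχ, Real.smoothTransition.zero_of_nonpos (by linarith : 2 * t - 1 ≤ 0), zero_mul]
  have hχ_eq : ∀ t, 0 ≤ t → χ t = ψ t := fun t ht => by
    rcases le_total t 1 with h1 | h1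
    · simp only [hχ, hψ0 t ⟨ht, h1⟩, mul_zero]
    · simp only [hχ, Real.smoothTransition.one_of_one_le (by linarith : 1 ≤ 2 * t - 1), one_mul]
  have hχ_deriv : ∀ t, 0 < t → deriv χ t = deriv ψ t := fun t ht =>
    Filter.EventuallyEq.deriv_eq <| by
      filter_upwards [lt_mem_nhds ht] with u hu using hχ_eq u hu.le
  have hsupp : tsupport (fun p : ℝ × ℝ => φ p.1 * χ p.2) ⊆ {p : ℝ × ℝ | 0 < p.2} := by
    have hcl : IsClosed {p : ℝ × ℝ | 1 / 2 ≤ p.2} := isClosed_le continuous_const continuous_snd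
    refine (closure_minimal (fun p hp => ?_) hcl).trans fun p (hp : 1 / 2 ≤ p.2) =>
      (by linarith : (0 : ℝ) < p.2)
    by_contra hlt
    exact right_ne_zero_of_mul hp (hχ_low p.2 (not_le.1 hlt).le)
  have key := h (fun p => φ p.1 * χ p.2)
    ((hφ.comp contDiff_fst).mul (hχs.comp contDiff_snd)) (hφc.mul_fst_snd hχc) hsupp
  have hfd : ∀ p : ℝ × ℝ, fderiv ℝ (fun p : ℝ × ℝ => φ p.1 * χ p.2) p (0, 1)
      = φ p.1 * deriv χ p.2 := fun p => by
    have h1 : HasFDerivAt (fun p : ℝ × ℝ => φ p.1)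
        (deriv φ p.1 • ContinuousLinearMap.fst ℝ ℝ ℝ) p :=
      ((hφ.differentiable (by simp)) p.1).hasDerivAt.comp_hasFDerivAt p hasFDerivAt_fst
    have h2 : HasFDerivAt (fun p : ℝ × ℝ => χ p.2)
        (deriv χ p.2 • ContinuousLinearMap.snd ℝ ℝ ℝ) p :=
      ((hχs.differentiable (by simp)) p.2).hasDerivAt.comp_hasFDerivAt p hasFDerivAt_snd
    rw [(h1.fun_mul h2).fderiv]
    simp
  have hae : ∀ᵐ p ∂(volume : Measure (ℝ × ℝ)).restrict UHP, 0 < p.2 := by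
    rw [volume_restrict_UHP]
    have h0 : ∀ᵐ t ∂(volume : Measure ℝ).restrict (Ici 0), 0 < t := by
      rw [← restrict_Ioi_eq_restrict_Ici]
      exact ae_restrict_mem measurableSet_Ioi
    exact Measure.quasiMeasurePreserving_snd.ae h0
  calc ∫ p in UHP, f p * φ p.1 * deriv ψ p.2
      = ∫ p in UHP, f p * fderiv ℝ (fun p : ℝ × ℝ => φ p.1 * χ p.2) p (0, 1) :=
        integral_congr_ae <| by
          filter_upwards [hae] with p hp
          rw [hfd, hχ_deriv _ hp, mul_assoc]
    _ = -∫ p in UHP, ft p * (φ p.1 * χ p.2) := key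
    _ = -∫ p in UHP, ft p * φ p.1 * ψ p.2 := by
        congr 1
        refine integral_congr_ae ?_
        filter_upwards [hae] with p hp
        rw [hχ_eq _ hp.le, mul_assoc]

/-- The cutoff trace does not depend on the cutoff. -/
theorem cutoffTrace_ae_eq {f ft : ℝ × ℝ → ℝ} (hf : LocallyIntegrableOn f UHP)
    (hft : LocallyIntegrableOn ft UHP) (h : HasDistribTDeriv f ft) {η θ : ℝ → ℝ}
    (hη : ContDiff ℝ (⊤ : ℕ∞) η) (hηc : HasCompactSupport η) (hη1 : ∀ t ∈ Icc (0 : ℝ) 1, η t = 1)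
    (hθ : ContDiff ℝ (⊤ : ℕ∞) θ) (hθc : HasCompactSupport θ)
    (hθ1 : ∀ t ∈ Icc (0 : ℝ) 1, θ t = 1) :
    cutoffTrace η f ft =ᵐ[volume] cutoffTrace θ f ft := by
  refine ae_eq_of_integral_contDiff_smul_eq (locallyIntegrable_cutoffTrace hf hft hη hηc)
    (locallyIntegrable_cutoffTrace hf hft hθ hθc) fun φ hφ hφc => ?_
  simp only [smul_eq_mul, mul_comm (φ _)]
  rw [integral_cutoffTrace_mul hf hft hη hηc hφ.continuous hφc,
    integral_cutoffTrace_mul hf hft hθ hθc hφ.continuous hφc]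
  have key := h.integral_mul_deriv hφ hφc (hη.sub hθ) (hηc.sub hθc)
    fun t ht => by simp [hη1 t ht, hθ1 t ht]
  have hd : ∀ t, deriv (fun t => η t - θ t) t = deriv η t - deriv θ t := fun t =>
    deriv_fun_sub (hη.differentiable (by simp) t) (hθ.differentiable (by simp) t)
  simp only [hd, mul_sub] at key
  rw [integral_sub
      (integrableOn_UHP_mul_mul hf hφ.continuous hφc (hη.continuous_deriv (by simp)) hηc.deriv)
      (integrableOn_UHP_mul_mul hf hφ.continuous hφc (hθ.continuous_deriv (by simp)) hθc.deriv),
    integral_sub (integrableOn_UHP_mul_mul hft hφ.continuous hφc hη.continuous hηc)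
      (integrableOn_UHP_mul_mul hft hφ.continuous hφc hθ.continuous hθc)] at key
  linarith

theorem isTraceAt0_cutoffTrace {f ft : ℝ × ℝ → ℝ} (hf : LocallyIntegrableOn f UHP)
    (hft : LocallyIntegrableOn ft UHP) (h : HasDistribTDeriv f ft) {η : ℝ → ℝ}
    (hη : ContDiff ℝ (⊤ : ℕ∞) η) (hηc : HasCompactSupport η)
    (hη1 : ∀ t ∈ Icc (0 : ℝ) 1, η t = 1) : IsTraceAt0 f ft (cutoffTrace η f ft) := by
  refine ⟨locallyIntegrable_cutoffTrace hf hft hη hηc, fun θ hθ hθc hθ1 φ hφ hφc => ?_⟩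
  rw [← integral_cutoffTrace_mul hf hft hθ hθc hφ hφc]
  refine integral_congr_ae ?_
  filter_upwards [cutoffTrace_ae_eq hf hft h hη hηc hη1 hθ hθc hθ1] with s hs
  rw [hs]

namespace IsTraceAt0

variable {f ft g gt : ℝ × ℝ → ℝ} {tr tr' : ℝ → ℝ}

theorem ae_eq_cutoffTrace (h : IsTraceAt0 f ft tr) (hf : LocallyIntegrableOn f UHP)
    (hft : LocallyIntegrableOn ft UHP) {η : ℝ → ℝ}
    (hη : ContDiff ℝ (⊤ : ℕ∞) η) (hηc : HasCompactSupport η)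
    (hη1 : ∀ t ∈ Icc (0 : ℝ) 1, η t = 1) : tr =ᵐ[volume] cutoffTrace η f ft := by
  refine ae_eq_of_integral_contDiff_smul_eq h.1
    (locallyIntegrable_cutoffTrace hf hft hη hηc) fun φ hφ hφc => ?_
  simp only [smul_eq_mul, mul_comm (φ _)]
  rw [h.2 η hη hηc hη1 φ hφ.continuous hφc,
    integral_cutoffTrace_mul hf hft hη hηc hφ.continuous hφc]

theorem sub (h : IsTraceAt0 f ft tr) (h' : IsTraceAt0 g gt tr')
    (hf : LocallyIntegrableOn f UHP) (hft : LocallyIntegrableOn ft UHP)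
    (hg : LocallyIntegrableOn g UHP) (hgt : LocallyIntegrableOn gt UHP) :
    IsTraceAt0 (f - g) (ft - gt) (tr - tr') := by
  refine ⟨h.1.sub h'.1, fun η hη hηc hη1 φ hφ hφc => ?_⟩
  have hη' : Continuous (deriv η) := hη.continuous_deriv (by simp)
  have i1 := h.1.integrable_smul_right_of_hasCompactSupport hφ hφc
  have i2 := h'.1.integrable_smul_right_of_hasCompactSupport hφ hφc
  simp only [smul_eq_mul] at i1 i2
  simp only [Pi.sub_apply, sub_mul]
  rw [integral_sub i1 i2, h.2 η hη hηc hη1 φ hφ hφc, h'.2 η hη hηc hη1 φ hφ hφc,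
    integral_sub (integrableOn_UHP_mul_mul hf hφ hφc hη' hηc.deriv)
      (integrableOn_UHP_mul_mul hg hφ hφc hη' hηc.deriv),
    integral_sub (integrableOn_UHP_mul_mul hft hφ hφc hη.continuous hηc)
      (integrableOn_UHP_mul_mul hgt hφ hφc hη.continuous hηc)]
  ring

end IsTraceAt0

theorem exists_smooth_cutoff : ∃ η : ℝ → ℝ, ContDiff ℝ (⊤ : ℕ∞) η ∧ HasCompactSupport η ∧
    ∀ t ∈ Icc (0 : ℝ) 1, η t = 1 := by
  let b : ContDiffBump (0 : ℝ) := ⟨1, 2, one_pos, one_lt_two⟩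
  refine ⟨b, b.contDiff, b.hasCompactSupport, fun t ht => b.one_of_mem_closedBall ?_⟩
  rw [mem_closedBall_zero_iff, Real.norm_of_nonneg ht.1]
  exact ht.2

/-- The trace is bounded on compact sets by the local `L¹` norms of the function and of its
time derivative. -/
theorem exists_setIntegral_abs_trace_le {K : Set ℝ} (hK : IsCompact K) :
    ∃ R C C' : ℝ, ∀ (f ft : ℝ × ℝ → ℝ) (tr : ℝ → ℝ), LocallyIntegrableOn f UHP →
      LocallyIntegrableOn ft UHP → IsTraceAt0 f ft tr →
      ∫ s in K, |tr s| ≤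
        C * (∫ p in K ×ˢ Icc 0 R, |f p|) + C' * ∫ p in K ×ˢ Icc 0 R, |ft p| := by
  obtain ⟨η, hη, hηc, hη1⟩ := exists_smooth_cutoff
  have hη' : Continuous (deriv η) := hη.continuous_deriv (by simp)
  obtain ⟨R, hR⟩ := hηc.exists_forall_lt_eq_zero
  have hR' : ∀ t, R < t → deriv η t = 0 := fun t ht => by
    have he : η =ᶠ[𝓝 t] fun _ => 0 := by
      filter_upwards [lt_mem_nhds ht] with u hu using hR u hu
    rw [he.deriv_eq, deriv_const]
  obtain ⟨C, hC⟩ := hηc.deriv.exists_bound_of_continuous hη'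
  obtain ⟨C', hC'⟩ := hηc.exists_bound_of_continuous hη.continuous
  refine ⟨R, C, C', fun f ft tr hf hft h => ?_⟩
  have i1 := ((locallyIntegrable_sliceIntegral hf hη' hηc.deriv).integrableOn_isCompact hK).norm
  have i2 :=
    ((locallyIntegrable_sliceIntegral hft hη.continuous hηc).integrableOn_isCompact hK).norm
  calc ∫ s in K, |tr s|
      ≤ ∫ s in K, (|sliceIntegral f (deriv η) s| + |sliceIntegral ft η s|) := by
        refine integral_mono_ae (h.1.integrableOn_isCompact hK).norm (i1.add i2) ?_
        filter_upwards [ae_restrict_of_ae (h.ae_eq_cutoffTrace hf hft hη hηc hη1)] with s hs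
        rw [hs, cutoffTrace]
        exact (abs_sub _ _).trans_eq (by rw [abs_neg])
    _ = (∫ s in K, |sliceIntegral f (deriv η) s|) + ∫ s in K, |sliceIntegral ft η s| :=
        integral_add i1 i2
    _ ≤ _ := add_le_add (setIntegral_abs_sliceIntegral_le hf hK hη' hR' hC)
        (setIntegral_abs_sliceIntegral_le hft hK hη.continuous hR hC')

/-- existence and L¹_loc continuity of the trace at t = 0. -/
theorem stmt17 :
    (∀ f ft : ℝ × ℝ → ℝ,
      MeasureTheory.LocallyIntegrableOn f UHP →
      MeasureTheory.LocallyIntegrableOn ft UHP →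
      HasDistribTDeriv f ft → ∃ tr : ℝ → ℝ, IsTraceAt0 f ft tr) ∧
    (∀ (f ft : ℝ × ℝ → ℝ) (fn ftn : ℕ → ℝ × ℝ → ℝ) (tr : ℝ → ℝ) (trn : ℕ → ℝ → ℝ),
      MeasureTheory.LocallyIntegrableOn f UHP →
      MeasureTheory.LocallyIntegrableOn ft UHP →
      HasDistribTDeriv f ft →
      (∀ n, MeasureTheory.LocallyIntegrableOn (fn n) UHP) →
      (∀ n, MeasureTheory.LocallyIntegrableOn (ftn n) UHP) →
      (∀ n, HasDistribTDeriv (fn n) (ftn n)) →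
      IsTraceAt0 f ft tr →
      (∀ n, IsTraceAt0 (fn n) (ftn n) (trn n)) →
      (∀ K : Set (ℝ × ℝ), IsCompact K → K ⊆ UHP →
        Tendsto (fun n => ∫ p in K, |fn n p - f p|) atTop (nhds 0)) →
      (∀ K : Set (ℝ × ℝ), IsCompact K → K ⊆ UHP →
        Tendsto (fun n => ∫ p in K, |ftn n p - ft p|) atTop (nhds 0)) →
      ∀ K : Set ℝ, IsCompact K →
        Tendsto (fun n => ∫ s in K, |trn n s - tr s|) atTop (nhds 0)) := by
  refine ⟨fun f ft hf hft h => ?_, ?_⟩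
  · obtain ⟨η, hη, hηc, hη1⟩ := exists_smooth_cutoff
    exact ⟨_, isTraceAt0_cutoffTrace hf hft h hη hηc hη1⟩
  · intro f ft fn ftn tr trn hf hft _ hfn hftn _ htr htrn hlim hlimt K hK
    obtain ⟨R, C, C', hbound⟩ := exists_setIntegral_abs_trace_le hK
    have hc : IsCompact (K ×ˢ Icc 0 R) := hK.prod isCompact_Icc
    have hup := ((hlim _ hc prod_Icc_subset_UHP).const_mul C).add
      ((hlimt _ hc prod_Icc_subset_UHP).const_mul C')
    rw [mul_zero, mul_zero, add_zero] at hup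
    exact squeeze_zero (fun n => integral_nonneg fun s => abs_nonneg _)
      (fun n => hbound _ _ _ ((hfn n).sub hf) ((hftn n).sub hft)
        ((htrn n).sub htr (hfn n) (hftn n) hf hft)) hup
end

section
/- Let t_k ∈ (0,1) be an increasing sequence satisfying 1 - t_{k+1} ≤ (1-t_k)/4 for all k ≥ 1, and let g : (0,1) → [0,∞) be integrable satisfying (1/(1-t_{k+1})) ∫_{t_{k+1}}^1 g(s) ds ≤ (1/(4(1-t_k))) ∫_{t_k}^1 g(s) ds for all k. Define λ(t) = 2^k for t ∈ [t_k, t_{k+1}). Then (1/(1-t_j)) ∫_{t_j}^1 λ(s) g(s) ds ≤ C 2^{-j} (1/(1-t_1)) ∫_{t_1}^1 g(s) ds, so in particular (1/(1-t_j)) ∫_{t_j}^1 λ(s) g(s) ds → 0 as j → ∞. -/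
open MeasureTheory Set Filter Topology

/-- If the tails of `g` shrink by a factor `16` along `t`, then `f = 2 ^ k * g` on `[t k, t (k + 1))`
has partial integrals comparable to the first term. -/
lemma partial_integral_bounds {t : ℕ → ℝ} {f g : ℝ → ℝ} (ht : StrictMono t)
    (ht1 : ∀ k, t k < 1)
    (hg : ∀ k, ∀ s ∈ Ioo (t k) 1, 0 ≤ g s)
    (hgi : ∀ k, IntervalIntegrable g volume (t k) 1)
    (hdecay : ∀ k, 16 * ∫ s in (t (k + 1))..1, g s ≤ ∫ s in (t k)..1, g s)
    (hfg : ∀ k, ∀ s ∈ Ico (t k) (t (k + 1)), f s = 2 ^ k * g s) (n j : ℕ)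
    (hfi : IntervalIntegrable f volume (t j) 1) :
    0 ≤ ∫ s in (t j)..(t (j + n)), f s ∧
      ∫ s in (t j)..(t (j + n)), f s ≤ 2 * 2 ^ j * ∫ s in (t j)..1, g s := by
  have hG : ∀ k, 0 ≤ ∫ s in (t k)..1, g s := fun k => by
    rw [intervalIntegral.integral_of_le (ht1 k).le, integral_Ioc_eq_integral_Ioo]
    exact setIntegral_nonneg measurableSet_Ioo (hg k)
  induction n generalizing j with
  | zero =>
    have := hG j
    simp only [add_zero, intervalIntegral.integral_same, le_refl, true_and]
    positivity
  | succ n ih =>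
    have hlt : t j < t (j + 1) := ht (Nat.lt_succ_self j)
    have hsub : ∀ a b : ℝ, t j ≤ a → a ≤ b → b ≤ 1 → uIcc a b ⊆ uIcc (t j) 1 := by
      intro a b h1 h2 h3
      rw [uIcc_of_le h2, uIcc_of_le (ht1 j).le]
      exact Icc_subset_Icc h1 h3
    have hfi' : IntervalIntegrable f volume (t (j + 1)) 1 :=
      hfi.mono_set (hsub _ _ hlt.le (ht1 _).le le_rfl)
    obtain ⟨hlow, hup⟩ := ih (j + 1) hfi'
    have hidx : j + 1 + n = j + (n + 1) := by ring
    rw [hidx] at hlow hup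
    have hle : t (j + 1) ≤ t (j + (n + 1)) := ht.monotone (by omega)
    have hfsplit := intervalIntegral.integral_add_adjacent_intervals
      (hfi.mono_set (hsub _ _ le_rfl hlt.le (ht1 _).le))
      (hfi.mono_set (hsub _ _ hlt.le hle (ht1 _).le))
    have hgsplit := intervalIntegral.integral_add_adjacent_intervals
      ((hgi j).mono_set (hsub _ _ le_rfl hlt.le (ht1 _).le)) (hgi (j + 1))
    have hpiece : ∫ s in (t j)..(t (j + 1)), f s = 2 ^ j * ∫ s in (t j)..(t (j + 1)), g s := by
      rw [← intervalIntegral.integral_const_mul, intervalIntegral.integral_of_le hlt.le,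
        intervalIntegral.integral_of_le hlt.le, integral_Ioc_eq_integral_Ioo,
        integral_Ioc_eq_integral_Ioo]
      exact setIntegral_congr_fun measurableSet_Ioo fun s hs => hfg j s (Ioo_subset_Ico_self hs)
    have hpos : 0 ≤ ∫ s in (t j)..(t (j + 1)), g s := by
      rw [intervalIntegral.integral_of_le hlt.le, integral_Ioc_eq_integral_Ioo]
      exact setIntegral_nonneg measurableSet_Ioo
        fun s hs => hg j s ⟨hs.1, hs.2.trans (ht1 _)⟩
    have h2 : (0 : ℝ) < 2 ^ j := by positivity
    rw [← hfsplit, hpiece]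
    refine ⟨by positivity, ?_⟩
    have hd := hdecay j
    have hG1 := hG (j + 1)
    have hG0 := hG j
    rw [pow_succ] at hup
    have key : (∫ s in (t j)..(t (j + 1)), g s) + 4 * ∫ s in (t (j + 1))..1, g s
        ≤ 2 * ∫ s in (t j)..1, g s := by linarith
    nlinarith [mul_le_mul_of_nonneg_left key h2.le]

/-- Passing to the limit in `partial_integral_bounds`; a non-integrable `f` has integral `0`. -/
lemma tail_integral_bounds {t : ℕ → ℝ} {f g : ℝ → ℝ} (ht : StrictMono t)
    (ht1 : ∀ k, t k < 1) (htlim : Tendsto t atTop (𝓝 1))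
    (hg : ∀ k, ∀ s ∈ Ioo (t k) 1, 0 ≤ g s)
    (hgi : ∀ k, IntervalIntegrable g volume (t k) 1)
    (hdecay : ∀ k, 16 * ∫ s in (t (k + 1))..1, g s ≤ ∫ s in (t k)..1, g s)
    (hfg : ∀ k, ∀ s ∈ Ico (t k) (t (k + 1)), f s = 2 ^ k * g s) (j : ℕ) :
    0 ≤ ∫ s in (t j)..1, f s ∧
      ∫ s in (t j)..1, f s ≤ 2 * 2 ^ j * ∫ s in (t j)..1, g s := by
  by_cases hfi : IntervalIntegrable f volume (t j) 1
  · have hbounds := fun n => partial_integral_bounds ht ht1 hg hgi hdecay hfg n j hfi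
    have hcont := intervalIntegral.continuousOn_primitive_interval
      ((intervalIntegrable_iff' (by simp)).1 hfi)
    have hmem : ∀ n, t (j + n) ∈ uIcc (t j) 1 := fun n => by
      rw [uIcc_of_le (ht1 j).le]
      exact ⟨ht.monotone (by omega), (ht1 _).le⟩
    have hshift : Tendsto (fun n => t (j + n)) atTop (𝓝 1) :=
      htlim.comp (tendsto_atTop_mono (fun n => Nat.le_add_left n j) tendsto_id)
    have hlim : Tendsto (fun n => ∫ s in (t j)..(t (j + n)), f s) atTop
        (𝓝 (∫ s in (t j)..1, f s)) :=
      (hcont 1 right_mem_uIcc).tendsto.comp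
        (tendsto_nhdsWithin_iff.2 ⟨hshift, Eventually.of_forall hmem⟩)
    exact ⟨ge_of_tendsto' hlim fun n => (hbounds n).1, le_of_tendsto' hlim fun n => (hbounds n).2⟩
  · rw [intervalIntegral.integral_undef hfi]
    have : 0 ≤ ∫ s in (t j)..1, g s := by
      rw [intervalIntegral.integral_of_le (ht1 j).le, integral_Ioc_eq_integral_Ioo]
      exact setIntegral_nonneg measurableSet_Ioo (hg j)
    exact ⟨le_rfl, by positivity⟩

/-- geometric decay of the weighted tail averages. -/
theorem stmt19 :
    ∃ C > (0:ℝ), ∀ (t : ℕ → ℝ) (g lam : ℝ → ℝ),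
      StrictMono t →
      (∀ k, t k ∈ Set.Ioo (0:ℝ) 1) →
      (∀ k, 1 - t (k + 1) ≤ (1 - t k) / 4) →
      (∀ s ∈ Set.Ioo (0:ℝ) 1, 0 ≤ g s) →
      IntegrableOn g (Set.Ioo 0 1) →
      (∀ k, (1 / (1 - t (k + 1))) * ∫ s in Set.Ioc (t (k + 1)) 1, g s ≤
        (1 / (4 * (1 - t k))) * ∫ s in Set.Ioc (t k) 1, g s) →
      (∀ k, ∀ s ∈ Set.Ico (t k) (t (k + 1)), lam s = 2 ^ k) →
      (∀ j, (1 / (1 - t j)) * ∫ s in Set.Ioc (t j) 1, lam s * g s ≤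
        C * (1 / 2) ^ j * ((1 / (1 - t 0)) * ∫ s in Set.Ioc (t 0) 1, g s)) ∧
      Tendsto (fun j => (1 / (1 - t j)) * ∫ s in Set.Ioc (t j) 1, lam s * g s)
        atTop (nhds 0) := by
  refine ⟨2, two_pos, fun t g lam ht htm hgap hg hgi havg hlam => ?_⟩
  have ht1 : ∀ k, t k < 1 := fun k => (htm k).2
  have hpos : ∀ k, 0 < 1 - t k := fun k => sub_pos.2 (ht1 k)
  simp only [← fun k => intervalIntegral.integral_of_le (μ := volume) (f := g) (ht1 k).le,
    ← fun k => intervalIntegral.integral_of_le (μ := volume) (f := fun s => lam s * g s)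
      (ht1 k).le] at havg ⊢
  have hg' : ∀ k, ∀ s ∈ Ioo (t k) 1, 0 ≤ g s := fun k s hs => hg s ⟨(htm k).1.trans hs.1, hs.2⟩
  have hgi' : ∀ k, IntervalIntegrable g volume (t k) 1 := fun k =>
    (intervalIntegrable_iff_integrableOn_Ioo_of_le (ht1 k).le (by simp)).2
      (hgi.mono_set (Ioo_subset_Ioo_left (htm k).1.le))
  have hG : ∀ k, 0 ≤ ∫ s in (t k)..1, g s := fun k => by
    rw [intervalIntegral.integral_of_le (ht1 k).le, integral_Ioc_eq_integral_Ioo]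
    exact setIntegral_nonneg measurableSet_Ioo (hg' k)
  have htlim : Tendsto t atTop (𝓝 1) := by
    have hbd : ∀ k, 1 - t k ≤ (1 / 4 : ℝ) ^ k := fun k => by
      induction k with
      | zero => have := (htm 0).1; simp; linarith
      | succ k ih => rw [pow_succ]; linarith [hgap k]
    have h0 : Tendsto (fun k => 1 - t k) atTop (𝓝 0) :=
      squeeze_zero (fun k => (hpos k).le) hbd
        (tendsto_pow_atTop_nhds_zero_of_lt_one (by norm_num) (by norm_num))
    simpa using h0.const_sub 1
  have hdecay : ∀ k, 16 * ∫ s in (t (k + 1))..1, g s ≤ ∫ s in (t k)..1, g s := fun k => by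
    have h := havg k
    rw [one_div_mul_eq_div, one_div_mul_eq_div,
      div_le_div_iff₀ (hpos _) (mul_pos four_pos (hpos k))] at h
    have h' := mul_le_mul_of_nonneg_left (hgap k) (hG k)
    refine le_of_mul_le_mul_right ?_ (hpos k)
    linarith
  have hmean : ∀ j, (1 / (1 - t j)) * ∫ s in (t j)..1, g s ≤
      (1 / 4) ^ j * ((1 / (1 - t 0)) * ∫ s in (t 0)..1, g s) := fun j => by
    induction j with
    | zero => simp
    | succ j ih =>
      have h := havg j
      rw [← one_div_mul_one_div (4 : ℝ), mul_assoc] at h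
      rw [pow_succ]
      linarith
  have htail := tail_integral_bounds (f := fun s => lam s * g s) ht ht1 htlim hg' hgi' hdecay
    fun k s hs => by simp only [hlam k s hs]
  have hbound : ∀ j, (1 / (1 - t j)) * ∫ s in (t j)..1, lam s * g s ≤
      2 * (1 / 2) ^ j * ((1 / (1 - t 0)) * ∫ s in (t 0)..1, g s) := fun j => by
    have hinv : 0 ≤ 1 / (1 - t j) := (one_div_pos.2 (hpos j)).le
    have hpow : (2 : ℝ) ^ j * (1 / 4) ^ j = (1 / 2) ^ j := by rw [← mul_pow]; norm_num
    calc (1 / (1 - t j)) * ∫ s in (t j)..1, lam s * g s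
        ≤ (1 / (1 - t j)) * (2 * 2 ^ j * ∫ s in (t j)..1, g s) :=
          mul_le_mul_of_nonneg_left (htail j).2 hinv
      _ = 2 * 2 ^ j * ((1 / (1 - t j)) * ∫ s in (t j)..1, g s) := by ring
      _ ≤ 2 * 2 ^ j * ((1 / 4) ^ j * ((1 / (1 - t 0)) * ∫ s in (t 0)..1, g s)) :=
          mul_le_mul_of_nonneg_left (hmean j) (by positivity)
      _ = 2 * (1 / 2) ^ j * ((1 / (1 - t 0)) * ∫ s in (t 0)..1, g s) := by rw [← hpow]; ring
  refine ⟨hbound, squeeze_zero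
    (fun j => mul_nonneg (one_div_pos.2 (hpos j)).le (htail j).1) hbound ?_⟩
  have hgeom : Tendsto (fun j : ℕ => (1 / 2 : ℝ) ^ j) atTop (𝓝 0) :=
    tendsto_pow_atTop_nhds_zero_of_lt_one (by norm_num) (by norm_num)
  simpa using (hgeom.const_mul 2).mul_const ((1 / (1 - t 0)) * ∫ s in (t 0)..1, g s)
end
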